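/- arXiv:2206.08095 — 2 statements merged into one kernel-verified Lean document; each statement's English description precedes it below -/
import Mathlib

section
/- Let G be a Queen-Bee network with n non-root vertices and m = αn/2 edges. Then B(G) ≥ (5 − α)/3. Moreover, for every pair of integers n, m with n ≤ m ≤ 3n/2 there is a Queen-Bee network with n non-root vertices and m edges achieving B(G) = (5 − α)/3 where α = 2m/n (a star of triangles and leaves: m − n triangles through the root and 3n − 2m leaves attached to the root). -/
/-!
The lower bound comes from Foster's theorem. Let `B` be the incidence matrix with the row of the
root removed and `L = B Bᵀ` the grounded Laplacian; it is positive definite, because each vertex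
has an edge to the root. The effective resistance from the root to `x` is `(L⁻¹) x x`
(`grounded_inv_le_energy` gives the inequality needed here), and, writing `b e` for the column of
`e`, the quantity `b e ⬝ L⁻¹ b e` is the resistance across the edge `e`; these add up to
`tr (L⁻¹ L) = n` (`foster`). Choose for each non-root vertex one edge to the root, its *star edge*.
The total resistance to the root is then `n` minus the resistances across the other `m - n` edges.
Each of those is a loop, is parallel to a star edge, or closes a triangle with two star edges, so
the resistance across it is at most `2/3` (`edge_res_le`). Hence the total is at least
`n - 2 (m - n) / 3 = (5 n - 2 m) / 3`.

In the star of triangles and leaves, explicit flows show that a triangle vertex has resistance at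
most `2/3` (`effRes_le_triangle`) and a leaf at most `1` (`effRes_le_edge`), so the total is at most
`n - 2 (m - n) / 3`; the reverse inequality is the lower bound already established.
-/

open scoped ENNReal

set_option linter.unusedSectionVars false

attribute [local instance 10] Classical.propDecidable

/-- A multigraph (parallel edges allowed): a finite edge type with two endpoint maps. -/
structure Multigraph (V : Type) where
  E : Type
  [fE : Fintype E]
  fst : E → V
  snd : E → V

attribute [instance] Multigraph.fE

namespace Multigraph

variable {V : Type} [Fintype V] [DecidableEq V]

/-- The number of edges of a multigraph. -/
noncomputable def edgeCount (G : Multigraph V) : ℕ := Fintype.card G.E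

/-- The net current flowing out of `v` under the current assignment `f`
(the current `f e` flows from `G.fst e` to `G.snd e`). -/
noncomputable def netFlow (G : Multigraph V) (f : G.E → ℝ) (v : V) : ℝ :=
  ∑ e : G.E, ((if G.fst e = v then f e else 0) - (if G.snd e = v then f e else 0))

/-- A unit flow from `x` to `y`: Kirchhoff's current law holds at every vertex other
than `x` and `y`, and the net current out of `x` is `1`. -/
def IsUnitFlow (G : Multigraph V) (x y : V) (f : G.E → ℝ) : Prop :=
  G.netFlow f x = 1 ∧ ∀ v : V, v ≠ x → v ≠ y → G.netFlow f v = 0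

/-- The effective resistance between `x` and `y`: the least energy `∑ e, (I e)^2` of a
unit flow from `x` to `y` (`∞` if there is no such flow, `0` if `x = y`). -/
noncomputable def effRes (G : Multigraph V) (x y : V) : ℝ≥0∞ :=
  if x = y then 0
  else ⨅ f : {f : G.E → ℝ // G.IsUnitFlow x y f}, ENNReal.ofReal (∑ e : G.E, (f.1 e) ^ 2)

/-- Adjacency in a multigraph. -/
def Adj (G : Multigraph V) (u v : V) : Prop :=
  ∃ e : G.E, (G.fst e = u ∧ G.snd e = v) ∨ (G.fst e = v ∧ G.snd e = u)

/-- A multigraph is connected if every vertex is reachable from every other. -/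
def Connected (G : Multigraph V) : Prop :=
  ∀ u v : V, Relation.ReflTransGen G.Adj u v

/-- The degree of a vertex (loops count twice). -/
noncomputable def degree (G : Multigraph V) (v : V) : ℕ :=
  (Finset.univ.filter fun e : G.E => G.fst e = v).card +
    (Finset.univ.filter fun e : G.E => G.snd e = v).card

/-- The number of leaves (vertices of degree 1). -/
noncomputable def leafCount (G : Multigraph V) : ℕ :=
  (Finset.univ.filter fun v : V => G.degree v = 1).card

/-- `A(G)`: the average effective resistance over unordered pairs of distinct vertices. -/
noncomputable def avgPairRes (G : Multigraph V) : ℝ≥0∞ :=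
  (∑ x : V, ∑ y : V, G.effRes x y) / (2 * ((Fintype.card V).choose 2 : ℝ≥0∞))

/-- `A'(G)`: the average effective resistance over ordered pairs of vertices. -/
noncomputable def avgOrdRes (G : Multigraph V) : ℝ≥0∞ :=
  (∑ x : V, ∑ y : V, G.effRes x y) / ((Fintype.card V : ℝ≥0∞) ^ 2)

/-- The total effective resistance to the root `ρ`. -/
noncomputable def Rtot (G : Multigraph V) (ρ : V) : ℝ≥0∞ := ∑ x : V, G.effRes ρ x

/-- `B(G)`: the average resistance of a non-root vertex to the root `ρ`. -/
noncomputable def rootedAvg (G : Multigraph V) (ρ : V) : ℝ≥0∞ :=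
  G.Rtot ρ / ((Fintype.card V - 1 : ℕ) : ℝ≥0∞)

/-- A tree: a connected multigraph with one more vertex than edge. -/
def IsTree (G : Multigraph V) : Prop := G.Connected ∧ G.edgeCount + 1 = Fintype.card V

/-- `v` is within distance `ℓ` of `x` (there is a lazy walk of length `ℓ` from `x` to `v`). -/
def WithinDist (G : Multigraph V) (ℓ : ℕ) (x v : V) : Prop :=
  ∃ p : ℕ → V, p 0 = x ∧ p ℓ = v ∧ ∀ i, i < ℓ → p i = p (i + 1) ∨ G.Adj (p i) (p (i + 1))

end Multigraph

open Multigraph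

/-- `b_n(α)`: the least value of `B(G)` over rooted graphs with `n` non-root vertices
and at most `αn/2` edges (the root may be any vertex). -/
noncomputable def bFun (n : ℕ) (α : ℝ) : ℝ≥0∞ :=
  ⨅ G : {p : Multigraph (Fin (n + 1)) × Fin (n + 1) // (p.1.edgeCount : ℝ) ≤ α * n / 2},
    rootedAvg G.1.1 G.1.2

/-- `a_n(α)`: the least value of `A'(G)` over graphs with `n` vertices and at most
`αn/2` edges. -/
noncomputable def aFun (n : ℕ) (α : ℝ) : ℝ≥0∞ :=
  ⨅ G : {G : Multigraph (Fin n) // (G.edgeCount : ℝ) ≤ α * n / 2}, avgOrdRes G.1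

/-- `G_S`: add a new root vertex `Fin.last n` joined by one edge to each entry of the
`s`-tuple (multiset) `S`. -/
noncomputable def addRoot {n : ℕ} (G : Multigraph (Fin n)) {s : ℕ} (S : Fin s → Fin n) :
    Multigraph (Fin (n + 1)) where
  E := G.E ⊕ Fin s
  fst := Sum.elim (fun e => (G.fst e).castSucc) fun _ => Fin.last n
  snd := Sum.elim (fun e => (G.snd e).castSucc) fun i => (S i).castSucc

section Trees

variable {V : Type} [Fintype V] [DecidableEq V]

/-- The map identifying all leaves of `T` to the single new vertex `Sum.inr ()`. -/
noncomputable def leafId (T : Multigraph V) (v : V) : V ⊕ Unit :=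
  if T.degree v = 1 then Sum.inr () else Sum.inl v

/-- The multigraph obtained from `T` by identifying all its leaves to one vertex. -/
noncomputable def identifyLeaves (T : Multigraph V) : Multigraph (V ⊕ Unit) where
  E := T.E
  fst := fun e => leafId T (T.fst e)
  snd := fun e => leafId T (T.snd e)

/-- `R(x,T)`: the effective resistance between `x` and the vertex obtained by
identifying all the leaves of `T`. -/
noncomputable def treeRes (T : Multigraph V) (x : V) : ℝ≥0∞ :=
  (identifyLeaves T).effRes (leafId T x) (Sum.inr ())

/-- The rooted graph formed from `T` and a set `S` of sinks: add a root `Sum.inr ()`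
joined to each `v ∈ S` by `degree v - 1` parallel edges. -/
noncomputable def randRooted (T : Multigraph V) (S : Finset V) : Multigraph (V ⊕ Unit) where
  E := T.E ⊕ (Σ v : {v : V // v ∈ S}, Fin (T.degree v.1 - 1))
  fst := Sum.elim (fun e => Sum.inl (T.fst e)) fun p => Sum.inl p.1.1
  snd := Sum.elim (fun e => Sum.inl (T.snd e)) fun _ => Sum.inr ()

/-- The subgraph induced on the vertices satisfying `P`. -/
noncomputable def inducedSub (G : Multigraph V) (P : V → Prop) : Multigraph {v : V // P v} where
  E := {e : G.E // P (G.fst e) ∧ P (G.snd e)}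
  fst := fun e => ⟨G.fst e.1, e.2.1⟩
  snd := fun e => ⟨G.snd e.1, e.2.2⟩

lemma withinDist_self (G : Multigraph V) (ℓ : ℕ) (x : V) : G.WithinDist ℓ x x :=
  ⟨fun _ => x, rfl, rfl, fun _ _ => Or.inl rfl⟩

/-- `R(x, T_x)` where `T_x` is the subgraph of `G` induced by the vertices within
distance `ℓ` of `x`. -/
noncomputable def localRes (G : Multigraph V) (ℓ : ℕ) (x : V) : ℝ≥0∞ :=
  treeRes (inducedSub G (G.WithinDist ℓ x)) ⟨x, withinDist_self G ℓ x⟩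

/-- cyclic successor on `Fin k` -/
def cycSucc {k : ℕ} (i : Fin k) : Fin k :=
  ⟨(i.1 + 1) % k, Nat.mod_lt _ (Nat.lt_of_le_of_lt (Nat.zero_le i.1) i.isLt)⟩

/-- `G` contains a cycle with `k` (distinct) vertices and `k` distinct edges. -/
def HasCycleLength (G : Multigraph V) (k : ℕ) : Prop :=
  0 < k ∧ ∃ (v : Fin k → V) (e : Fin k → G.E), Function.Injective v ∧ Function.Injective e ∧
    ∀ i : Fin k, (G.fst (e i) = v i ∧ G.snd (e i) = v (cycSucc i)) ∨
      (G.fst (e i) = v (cycSucc i) ∧ G.snd (e i) = v i)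

/-- `G⁺/x`: delete the two edges `e₁, e₂` at the degree-2 vertex `x`, add an edge
`y₁y₂` (contracting `y₁x`), and reuse `x` as a new leaf attached to the root `ρ`. -/
noncomputable def contractPlus (G : Multigraph V) (x ρ : V) (e₁ e₂ : G.E) (y₁ y₂ : V) :
    Multigraph V where
  E := {e : G.E // e ≠ e₁ ∧ e ≠ e₂} ⊕ Fin 2
  fst := Sum.elim (fun e => G.fst e.1) fun i => if i = 0 then y₁ else x
  snd := Sum.elim (fun e => G.snd e.1) fun i => if i = 0 then y₂ else ρ

end Trees

/-- A Queen-Bee network: every non-root vertex is joined to the root. -/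
def QueenBee {n : ℕ} (G : Multigraph (Fin (n + 1))) (ρ : Fin (n + 1)) : Prop :=
  ∀ v : Fin (n + 1), v ≠ ρ → G.Adj ρ v

section Weighted

variable {V : Type} [Fintype V] [DecidableEq V]

/-- A unit flow from `x` to `y` in a weighted network with conductances `c`:
antisymmetric, zero on edges of zero conductance, and satisfying Kirchhoff's
current law away from `x` and `y`, with net current `1` out of `x`. -/
def IsWUnitFlow (c : V → V → ℝ) (x y : V) (f : V → V → ℝ) : Prop :=
  (∀ u v, f u v = - f v u) ∧ (∀ u v, c u v = 0 → f u v = 0) ∧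
    (∑ v : V, f x v) = 1 ∧ ∀ u : V, u ≠ x → u ≠ y → (∑ v : V, f u v) = 0

/-- The effective resistance between `x` and `y` in the weighted network with
conductances `c`: the least energy `∑_{uv} I_{uv}²/c_{uv}` of a unit flow. -/
noncomputable def weffRes (c : V → V → ℝ) (x y : V) : ℝ≥0∞ :=
  if x = y then 0
  else ⨅ f : {f : V → V → ℝ // IsWUnitFlow c x y f},
    ENNReal.ofReal ((1 / 2) * ∑ u : V, ∑ v : V, (f.1 u v) ^ 2 / c u v)

end Weighted

/-! ### Foster's theorem and the lower bound -/

section Foster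

open Matrix

variable {n : ℕ} (G : Multigraph (Fin (n + 1))) (ρ : Fin (n + 1))

/-- The incidence matrix of `G` with the row of `ρ` removed: the column of an edge is the
indicator of its first endpoint minus that of its second one, so a loop has zero column. -/
noncomputable def groundedInc : Matrix {v : Fin (n + 1) // v ≠ ρ} G.E ℝ :=
  fun v e => (if G.fst e = v.1 then 1 else 0) - (if G.snd e = v.1 then 1 else 0)

/-- The grounded Laplacian: the Laplacian of `G` with the row and column of `ρ` removed. -/
noncomputable def groundedLap :
    Matrix {v : Fin (n + 1) // v ≠ ρ} {v : Fin (n + 1) // v ≠ ρ} ℝ :=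
  groundedInc G ρ * (groundedInc G ρ)ᵀ

lemma groundedInc_mulVec (f : G.E → ℝ) (v : {v : Fin (n + 1) // v ≠ ρ}) :
    (groundedInc G ρ *ᵥ f) v = G.netFlow f v.1 := by
  simp only [mulVec, dotProduct, groundedInc, Multigraph.netFlow]
  refine Finset.sum_congr rfl fun e _ => ?_
  split_ifs <;> ring

lemma sum_netFlow (f : G.E → ℝ) : ∑ v, G.netFlow f v = 0 := by
  simp only [Multigraph.netFlow]
  rw [Finset.sum_comm]
  simp [Finset.sum_sub_distrib]

lemma groundedLap_dotProduct (φ : {v : Fin (n + 1) // v ≠ ρ} → ℝ) :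
    φ ⬝ᵥ (groundedLap G ρ *ᵥ φ) = ∑ e, ((groundedInc G ρ)ᵀ *ᵥ φ) e ^ 2 := by
  rw [groundedLap, ← mulVec_mulVec, dotProduct_mulVec, ← mulVec_transpose]
  simp [dotProduct, pow_two]

variable {G ρ}

/-- `s` chooses for each non-root vertex an edge joining it to the root. -/
def IsStar (G : Multigraph (Fin (n + 1))) (ρ : Fin (n + 1))
    (s : {v : Fin (n + 1) // v ≠ ρ} → G.E) : Prop :=
  ∀ v, (G.fst (s v) = ρ ∧ G.snd (s v) = v.1) ∨ (G.fst (s v) = v.1 ∧ G.snd (s v) = ρ)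

lemma IsStar.injective {s : {v : Fin (n + 1) // v ≠ ρ} → G.E} (hs : IsStar G ρ s) :
    Function.Injective s := by
  intro u v h
  have hu := hs u
  have hv := hs v
  rw [h] at hu
  have := u.2
  have := v.2
  apply Subtype.ext
  grind

/-- The potential drop along an edge, with the potential extended by `0` to the root. -/
lemma inc_transpose_mulVec (φ : {v : Fin (n + 1) // v ≠ ρ} → ℝ) (e : G.E) :
    ((groundedInc G ρ)ᵀ *ᵥ φ) e =
      (if h : G.fst e ≠ ρ then φ ⟨_, h⟩ else 0) - (if h : G.snd e ≠ ρ then φ ⟨_, h⟩ else 0) := by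
  have key : ∀ w : Fin (n + 1), ∑ v : {v : Fin (n + 1) // v ≠ ρ},
      (if w = v.1 then φ v else 0) = if h : w ≠ ρ then φ ⟨w, h⟩ else 0 := by
    intro w
    split_ifs with h
    · rw [Finset.sum_eq_single ⟨w, h⟩]
      · simp
      · intro b _ hb
        rw [if_neg]
        rintro rfl
        exact hb rfl
      · simp
    · refine Finset.sum_eq_zero fun v _ => if_neg ?_
      have := v.2
      grind
  rw [← key, ← key, ← Finset.sum_sub_distrib]
  simp only [mulVec, dotProduct, transpose_apply, groundedInc]
  refine Finset.sum_congr rfl fun v _ => ?_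
  split_ifs <;> ring

lemma IsStar.drop_sq {s : {v : Fin (n + 1) // v ≠ ρ} → G.E} (hs : IsStar G ρ s)
    (φ : {v : Fin (n + 1) // v ≠ ρ} → ℝ) (v : {v : Fin (n + 1) // v ≠ ρ}) :
    ((groundedInc G ρ)ᵀ *ᵥ φ) (s v) ^ 2 = φ v ^ 2 := by
  rw [inc_transpose_mulVec]
  have hv := v.2
  rcases hs v with ⟨h1, h2⟩ | ⟨h1, h2⟩ <;> simp [h1, h2, hv]

/-- Each vertex `v` contributes `φ v ^ 2` to the Dirichlet energy through its star edge. -/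
lemma IsStar.posDef {s : {v : Fin (n + 1) // v ≠ ρ} → G.E} (hs : IsStar G ρ s) :
    (groundedLap G ρ).PosDef := by
  refine PosDef.of_dotProduct_mulVec_pos ?_ ?_
  · simp [IsHermitian, groundedLap, conjTranspose_eq_transpose_of_trivial]
  · intro φ hφ
    obtain ⟨v, hv⟩ := Function.ne_iff.1 hφ
    rw [star_trivial, groundedLap_dotProduct]
    refine Finset.sum_pos' (fun e _ => sq_nonneg _) ⟨s v, Finset.mem_univ _, ?_⟩
    rw [hs.drop_sq]
    exact pow_pos (abs_pos.2 hv) 2 |>.trans_eq (sq_abs _)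

/-- The resistance across the edge `e`: the entry at `e` of the diagonal of `Bᵀ L⁻¹ B`. -/
noncomputable def edgeRes (G : Multigraph (Fin (n + 1))) (ρ : Fin (n + 1)) (e : G.E) : ℝ :=
  ((groundedInc G ρ)ᵀ * ((groundedLap G ρ)⁻¹ * groundedInc G ρ)) e e

/-- Foster's theorem. -/
lemma foster {s : {v : Fin (n + 1) // v ≠ ρ} → G.E} (hs : IsStar G ρ s) :
    ∑ e, edgeRes G ρ e = n := by
  have h : ∑ e, edgeRes G ρ e =
      ((groundedInc G ρ)ᵀ * ((groundedLap G ρ)⁻¹ * groundedInc G ρ)).trace := rfl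
  rw [h, trace_mul_comm, Matrix.mul_assoc, ← groundedLap,
    nonsing_inv_mul _ ((isUnit_iff_isUnit_det _).1 hs.posDef.isUnit), trace_one]
  simp

/-- The potential `L⁻¹ b` of the unit current along `e` drops by the resistance across `e`. -/
lemma edgeRes_eq_drop (e : G.E) : edgeRes G ρ e = ((groundedInc G ρ)ᵀ *ᵥ
    ((groundedLap G ρ)⁻¹ *ᵥ (groundedInc G ρ).col e)) e := rfl

/-- That potential has Dirichlet energy equal to its drop along `e`. -/
lemma edgeRes_eq_energy {s : {v : Fin (n + 1) // v ≠ ρ} → G.E} (hs : IsStar G ρ s) (e : G.E) :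
    edgeRes G ρ e = ∑ e', ((groundedInc G ρ)ᵀ *ᵥ
      ((groundedLap G ρ)⁻¹ *ᵥ (groundedInc G ρ).col e)) e' ^ 2 := by
  rw [← groundedLap_dotProduct, mulVec_mulVec,
    mul_nonsing_inv _ ((isUnit_iff_isUnit_det _).1 hs.posDef.isUnit), one_mulVec,
    dotProduct_comm]
  rfl

/-- An edge that is not a star edge is a loop, or parallel to a star edge, or in a triangle with
two star edges. The potential of `edgeRes_eq_energy` has energy `q`, its drop along `e`; comparing
with the energy on these edges alone gives `q ≥ 2 q²` or `q ≥ (3/2) q²`. -/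
lemma edge_res_le {s : {v : Fin (n + 1) // v ≠ ρ} → G.E} (hs : IsStar G ρ s) (e : G.E)
    (he : ∀ v, s v ≠ e) : edgeRes G ρ e ≤ 2 / 3 := by
  have hE := edgeRes_eq_energy hs e
  have hd := edgeRes_eq_drop (G := G) (ρ := ρ) e
  set φ := (groundedLap G ρ)⁻¹ *ᵥ (groundedInc G ρ).col e with hφ
  set q := edgeRes G ρ e
  have h1 : ∀ u, q ^ 2 + φ u ^ 2 ≤ q := by
    intro u
    have := Finset.sum_le_univ_sum_of_nonneg (s := {e, s u})
      (f := fun e' => ((groundedInc G ρ)ᵀ *ᵥ φ) e' ^ 2) (fun _ => sq_nonneg _)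
    rw [Finset.sum_pair (he u).symm, ← hE, hs.drop_sq, ← hd] at this
    exact this
  have h2 : ∀ u v, u ≠ v → q ^ 2 + (φ u ^ 2 + φ v ^ 2) ≤ q := by
    intro u v huv
    have := Finset.sum_le_univ_sum_of_nonneg (s := {e, s u, s v})
      (f := fun e' => ((groundedInc G ρ)ᵀ *ᵥ φ) e' ^ 2) (fun _ => sq_nonneg _)
    rw [Finset.sum_insert (by simp [(he u).symm, (he v).symm]),
      Finset.sum_pair (hs.injective.ne huv), ← hE, hs.drop_sq, hs.drop_sq, ← hd] at this
    exact this
  have hd' := hd.trans (inc_transpose_mulVec φ e)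
  by_cases hl : G.fst e = G.snd e
  · have : q = 0 := by rw [hd']; simp [hl]
    rw [this]; norm_num
  by_cases ha : G.fst e = ρ
  · have hb : G.snd e ≠ ρ := fun h => hl (ha.trans h.symm)
    simp only [ha, hb, ne_eq, not_true_eq_false, not_false_eq_true, dif_pos, dif_neg] at hd'
    nlinarith [h1 ⟨_, hb⟩, sq_nonneg (q - 1 / 2)]
  · by_cases hb : G.snd e = ρ
    · simp only [ha, hb, ne_eq, not_true_eq_false, not_false_eq_true, dif_pos, dif_neg] at hd'
      nlinarith [h1 ⟨_, ha⟩, sq_nonneg (q - 1 / 2)]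
    · simp only [ha, hb, ne_eq, not_false_eq_true, dif_pos] at hd'
      have h3 := h2 ⟨_, ha⟩ ⟨_, hb⟩ (fun h => hl (congrArg Subtype.val h))
      generalize φ ⟨_, ha⟩ = a at *
      generalize φ ⟨_, hb⟩ = b at *
      have h4 : q ^ 2 ≤ 2 * (a ^ 2 + b ^ 2) := by
        rw [hd']; nlinarith [sq_nonneg (a + b)]
      nlinarith [sq_nonneg (q - 2 / 3)]

/-- The column of a star edge is `±` a standard basis vector. -/
lemma IsStar.edgeRes_eq {s : {v : Fin (n + 1) // v ≠ ρ} → G.E} (hs : IsStar G ρ s)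
    (v : {v : Fin (n + 1) // v ≠ ρ}) :
    edgeRes G ρ (s v) = (groundedLap G ρ)⁻¹ v v := by
  rw [edgeRes_eq_drop, inc_transpose_mulVec]
  have hv := v.2
  have hne : ∀ u : {v : Fin (n + 1) // v ≠ ρ}, ρ ≠ u.1 := fun u => u.2.symm
  rcases hs v with ⟨h1, h2⟩ | ⟨h1, h2⟩ <;>
    simp [h1, h2, hv, mulVec, dotProduct, groundedInc, hne, Subtype.coe_inj]

/-- Thomson's principle: a unit flow from `ρ` to `x` has energy at least `(L⁻¹) x x`, by
comparison with the flow induced by the potential `L⁻¹ eₓ`. -/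
lemma grounded_inv_le_energy {s : {v : Fin (n + 1) // v ≠ ρ} → G.E} (hs : IsStar G ρ s)
    (x : {v : Fin (n + 1) // v ≠ ρ}) (f : G.E → ℝ) (hf : G.IsUnitFlow ρ x.1 f) :
    (groundedLap G ρ)⁻¹ x x ≤ ∑ e, f e ^ 2 := by
  have hx : G.netFlow f x.1 = -1 := by
    have h := sum_netFlow G f
    rw [Finset.sum_eq_add_of_mem ρ x.1 (Finset.mem_univ _) (Finset.mem_univ _) x.2.symm
      (fun c _ hc => hf.2 c hc.1 hc.2), hf.1] at h
    linarith
  have hB : groundedInc G ρ *ᵥ f = -Pi.single x 1 := by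
    ext v
    rw [groundedInc_mulVec]
    by_cases h : v = x
    · subst h; simp [hx]
    · rw [hf.2 v.1 v.2 (fun h' => h (Subtype.ext h'))]
      simp [h]
  set φ := (groundedLap G ρ)⁻¹ *ᵥ Pi.single x 1 with hφ
  have hφx : φ x = (groundedLap G ρ)⁻¹ x x := by simp [hφ]
  have hen : ∑ e, ((groundedInc G ρ)ᵀ *ᵥ φ) e ^ 2 = φ x := by
    rw [← groundedLap_dotProduct, hφ, mulVec_mulVec,
      mul_nonsing_inv _ ((isUnit_iff_isUnit_det _).1 hs.posDef.isUnit), one_mulVec]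
    simp
  have hcross : ∑ e, f e * ((groundedInc G ρ)ᵀ *ᵥ φ) e = -φ x := by
    change f ⬝ᵥ ((groundedInc G ρ)ᵀ *ᵥ φ) = _
    rw [dotProduct_mulVec, vecMul_transpose, hB]
    simp
  have hsq : 0 ≤ ∑ e, (f e + ((groundedInc G ρ)ᵀ *ᵥ φ) e) ^ 2 :=
    Finset.sum_nonneg fun _ _ => sq_nonneg _
  have hexp : ∑ e, (f e + ((groundedInc G ρ)ᵀ *ᵥ φ) e) ^ 2 =
      ∑ e, f e ^ 2 + 2 * ∑ e, f e * ((groundedInc G ρ)ᵀ *ᵥ φ) e +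
        ∑ e, ((groundedInc G ρ)ᵀ *ᵥ φ) e ^ 2 := by
    rw [Finset.mul_sum, ← Finset.sum_add_distrib, ← Finset.sum_add_distrib]
    exact Finset.sum_congr rfl fun _ _ => by ring
  rw [hexp, hcross, hen] at hsq
  linarith

lemma sum_inv_diag_ge {s : {v : Fin (n + 1) // v ≠ ρ} → G.E} (hs : IsStar G ρ s) :
    (5 * n - 2 * (G.edgeCount : ℝ)) / 3 ≤ ∑ x, (groundedLap G ρ)⁻¹ x x := by
  set S : Finset G.E := Finset.univ.image s with hS
  have hcard : S.card = n := by
    rw [hS, Finset.card_image_of_injective _ hs.injective]; simp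
  have hsum : ∑ e ∈ S, edgeRes G ρ e = ∑ x, (groundedLap G ρ)⁻¹ x x := by
    rw [hS, Finset.sum_image (fun a _ b _ h => hs.injective h)]
    exact Finset.sum_congr rfl fun v _ => hs.edgeRes_eq v
  have hrest : ∑ e ∈ Sᶜ, edgeRes G ρ e ≤ Sᶜ.card • (2 / 3 : ℝ) := by
    refine Finset.sum_le_card_nsmul _ _ _ fun e he => edge_res_le hs e fun v hv => ?_
    simp only [hS, Finset.mem_compl, Finset.mem_image, Finset.mem_univ, true_and,
      not_exists] at he
    exact he v hv
  have hcc : (n : ℝ) + Sᶜ.card = G.edgeCount := by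
    have := Finset.card_add_card_compl S
    rw [hcard] at this
    exact_mod_cast this
  have htot := foster hs
  rw [← Finset.sum_add_sum_compl S, hsum] at htot
  rw [nsmul_eq_mul] at hrest
  linarith

end Foster

lemma lower_bound (n : ℕ) (hn : 0 < n) (G : Multigraph (Fin (n + 1))) (ρ : Fin (n + 1))
    (hG : QueenBee G ρ) :
    ENNReal.ofReal ((5 - 2 * (G.edgeCount : ℝ) / n) / 3) ≤ rootedAvg G ρ := by
  have hex : ∀ v : {v : Fin (n + 1) // v ≠ ρ}, ∃ e : G.E,
      (G.fst e = ρ ∧ G.snd e = v.1) ∨ (G.fst e = v.1 ∧ G.snd e = ρ) := fun v => hG v.1 v.2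
  choose s hs using hex
  replace hs : IsStar G ρ s := hs
  have hn' : (0 : ℝ) < n := by exact_mod_cast hn
  have hR : ENNReal.ofReal ((5 * n - 2 * (G.edgeCount : ℝ)) / 3) ≤ G.Rtot ρ := by
    calc _ ≤ ENNReal.ofReal (∑ x, (groundedLap G ρ)⁻¹ x x) :=
          ENNReal.ofReal_le_ofReal (sum_inv_diag_ge hs)
      _ = ∑ x, ENNReal.ofReal ((groundedLap G ρ)⁻¹ x x) :=
          ENNReal.ofReal_sum_of_nonneg fun x _ => hs.posDef.inv.posSemidef.diag_nonneg
      _ ≤ ∑ x : {v : Fin (n + 1) // v ≠ ρ}, G.effRes ρ x.1 := by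
          refine Finset.sum_le_sum fun x _ => ?_
          rw [Multigraph.effRes, if_neg x.2.symm]
          exact le_iInf fun f =>
            ENNReal.ofReal_le_ofReal (grounded_inv_le_energy hs x f.1 f.2)
      _ ≤ G.Rtot ρ := by
          rw [Multigraph.Rtot, ← Finset.sum_subtype (Finset.univ.filter fun v => v ≠ ρ) (by simp)
            (fun x => G.effRes ρ x)]
          exact Finset.sum_le_sum_of_subset (Finset.filter_subset _ _)
  rw [rootedAvg, Fintype.card_fin, Nat.add_sub_cancel]
  rw [ENNReal.le_div_iff_mul_le (by left; simp; omega) (by simp),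
    ← ENNReal.ofReal_natCast, ← ENNReal.ofReal_mul' hn'.le]
  refine le_trans (le_of_eq ?_) hR
  congr 1
  field_simp

/-! ### The star of triangles and leaves -/

section Extremal

variable {V : Type} [Fintype V] [DecidableEq V] (G : Multigraph V)

lemma netFlow_add (f g : G.E → ℝ) (v : V) :
    G.netFlow (f + g) v = G.netFlow f v + G.netFlow g v := by
  simp only [Multigraph.netFlow, ← Finset.sum_add_distrib, Pi.add_apply]
  refine Finset.sum_congr rfl fun e _ => ?_
  split_ifs <;> ring

lemma netFlow_single (e : G.E) (c : ℝ) (v : V) :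
    G.netFlow (Pi.single e c) v =
      (if G.fst e = v then c else 0) - (if G.snd e = v then c else 0) := by
  rw [Multigraph.netFlow, Finset.sum_eq_single e]
  · simp
  · intro b _ hb
    simp [Pi.single_eq_of_ne hb]
  · simp

variable {G}

lemma effRes_le_of_flow {x y : V} (f : G.E → ℝ) (hf : G.IsUnitFlow x y f) :
    G.effRes x y ≤ ENNReal.ofReal (∑ e, f e ^ 2) := by
  rw [Multigraph.effRes]
  split_ifs
  · exact zero_le
  · exact iInf_le_of_le ⟨f, hf⟩ le_rfl

lemma effRes_le_edge {ρ x : V} (hx : x ≠ ρ) (e : G.E) (h1 : G.fst e = ρ) (h2 : G.snd e = x) :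
    G.effRes ρ x ≤ ENNReal.ofReal 1 := by
  refine (effRes_le_of_flow (Pi.single e 1) ⟨?_, ?_⟩).trans (ENNReal.ofReal_le_ofReal ?_)
  · simp [netFlow_single, h1, h2, hx]
  · intro v hv hv'
    simp [netFlow_single, h1, h2, hv.symm, hv'.symm]
  · simp [Pi.single_apply]

/-- The optimal flow in a triangle: `2/3` directly along `ρx`, and `1/3` through `y`. -/
lemma effRes_le_triangle {ρ x y : V} (hx : x ≠ ρ) (hy : y ≠ ρ) (hxy : x ≠ y) (e e' g : G.E)
    (h1 : G.fst e = ρ) (h2 : G.snd e = x) (h1' : G.fst e' = ρ) (h2' : G.snd e' = y)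
    (hg : (G.fst g = x ∧ G.snd g = y) ∨ (G.fst g = y ∧ G.snd g = x)) :
    G.effRes ρ x ≤ ENNReal.ofReal (2 / 3) := by
  have hne : e ≠ e' := by rintro rfl; exact hxy (h2.symm.trans h2')
  have hge : g ≠ e := by rintro rfl; grind
  have hge' : g ≠ e' := by rintro rfl; grind
  -- the current in `g` runs from `y` to `x`
  obtain ⟨c, hc, hcf⟩ : ∃ c : ℝ, c ^ 2 = 1 / 9 ∧
      ∀ v, G.netFlow (Pi.single g c) v =
        (if y = v then 1 / 3 else 0) - (if x = v then 1 / 3 else 0) := by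
    rcases hg with ⟨ha, hb⟩ | ⟨ha, hb⟩
    · refine ⟨-1 / 3, by norm_num, fun v => ?_⟩
      rw [netFlow_single, ha, hb]
      split_ifs <;> norm_num
    · refine ⟨1 / 3, by norm_num, fun v => ?_⟩
      rw [netFlow_single, ha, hb]
  refine (effRes_le_of_flow (Pi.single e (2 / 3) + Pi.single e' (1 / 3) + Pi.single g c)
    ⟨?_, ?_⟩).trans (ENNReal.ofReal_le_ofReal ?_)
  · simp only [netFlow_add, hcf, netFlow_single, h1, h2, h1', h2', hx, hy, if_true, if_false]
    norm_num
  · intro v hv hv'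
    simp only [netFlow_add, hcf, netFlow_single, h1, h2, h1', h2', hv.symm, hv'.symm, if_false]
    ring
  · have hsq : ∀ a, (Pi.single e (2 / 3) + Pi.single e' (1 / 3) + Pi.single g c : G.E → ℝ) a ^ 2 =
        (Pi.single e (4 / 9) : G.E → ℝ) a + (Pi.single e' (1 / 9) : G.E → ℝ) a
          + (Pi.single g (1 / 9) : G.E → ℝ) a := by
      intro a
      simp only [Pi.add_apply, Pi.single_apply]
      by_cases ha : a = e
      · subst ha; simp [hne, hge.symm]; norm_num
      · by_cases ha' : a = e'
        · subst ha'; simp [ha, hge'.symm]; norm_num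
        · by_cases hag : a = g
          · simp [hag, hge, hge', hc]
          · simp [ha, ha', hag]
    simp only [hsq, Finset.sum_add_distrib, Finset.sum_pi_single', Finset.mem_univ, if_true]
    norm_num

end Extremal

/-- The star of triangles and leaves with root `0`: an edge from the root to each vertex
`1, …, n`, and an edge joining `2 j + 1` to `2 j + 2` for each `j < k`. -/
def triangleStar (n k : ℕ) (h : 2 * k ≤ n) : Multigraph (Fin (n + 1)) where
  E := Fin n ⊕ Fin k
  fst := Sum.elim (fun _ => 0) fun j => Fin.succ ⟨2 * j.1, by omega⟩
  snd := Sum.elim Fin.succ fun j => Fin.succ ⟨2 * j.1 + 1, by omega⟩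

lemma triangleStar_queenBee (n k : ℕ) (h : 2 * k ≤ n) : QueenBee (triangleStar n k h) 0 := by
  intro v hv
  obtain ⟨i, rfl⟩ := Fin.exists_succ_eq.2 hv
  exact ⟨Sum.inl i, Or.inl ⟨rfl, rfl⟩⟩

lemma triangleStar_effRes_le (n k : ℕ) (h : 2 * k ≤ n) (i : Fin n) :
    (triangleStar n k h).effRes 0 i.succ ≤ ENNReal.ofReal (if i.1 < 2 * k then 2 / 3 else 1) := by
  split_ifs with hi
  · by_cases hp : i.1 % 2 = 0
    · have hi' : i = ⟨2 * (i.1 / 2), by omega⟩ := Fin.ext (by simp; omega)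
      refine effRes_le_triangle (G := triangleStar n k h)
        (y := Fin.succ ⟨2 * (i.1 / 2) + 1, by omega⟩)
        (Fin.succ_ne_zero _) (Fin.succ_ne_zero _) ?_ (Sum.inl i)
        (Sum.inl ⟨2 * (i.1 / 2) + 1, by omega⟩) (Sum.inr ⟨i.1 / 2, by omega⟩) rfl rfl rfl rfl
        (Or.inl ⟨congrArg Fin.succ hi'.symm, rfl⟩)
      simp [Fin.ext_iff]; omega
    · have hi' : i = ⟨2 * (i.1 / 2) + 1, by omega⟩ := Fin.ext (by simp; omega)
      refine effRes_le_triangle (G := triangleStar n k h)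
        (y := Fin.succ ⟨2 * (i.1 / 2), by omega⟩)
        (Fin.succ_ne_zero _) (Fin.succ_ne_zero _) ?_ (Sum.inl i)
        (Sum.inl ⟨2 * (i.1 / 2), by omega⟩) (Sum.inr ⟨i.1 / 2, by omega⟩) rfl rfl rfl rfl
        (Or.inr ⟨rfl, congrArg Fin.succ hi'.symm⟩)
      simp [Fin.ext_iff]; omega
  · exact effRes_le_edge (G := triangleStar n k h) (Fin.succ_ne_zero _) (Sum.inl i) rfl rfl

lemma attained (n m : ℕ) (hn : 0 < n) (hnm : n ≤ m) (hm : 2 * m ≤ 3 * n) :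
    ∃ (G : Multigraph (Fin (n + 1))) (ρ : Fin (n + 1)), QueenBee G ρ ∧
      G.edgeCount = m ∧
      rootedAvg G ρ = ENNReal.ofReal ((5 - 2 * (m : ℝ) / n) / 3) := by
  obtain ⟨k, rfl⟩ := Nat.exists_eq_add_of_le hnm
  have h : 2 * k ≤ n := by omega
  have hcard : (triangleStar n k h).edgeCount = n + k := by
    change Fintype.card (Fin n ⊕ Fin k) = n + k
    simp
  have hn' : (0 : ℝ) < n := by exact_mod_cast hn
  refine ⟨triangleStar n k h, 0, triangleStar_queenBee n k h, hcard, le_antisymm ?_ ?_⟩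
  · have hR : (triangleStar n k h).Rtot 0 ≤ ENNReal.ofReal (n - 2 * k / 3) := by
      have h0 : (triangleStar n k h).effRes 0 0 = 0 := if_pos rfl
      rw [Multigraph.Rtot, Fin.sum_univ_succ, h0, zero_add]
      refine (Finset.sum_le_sum fun i _ => triangleStar_effRes_le n k h i).trans (le_of_eq ?_)
      rw [← ENNReal.ofReal_sum_of_nonneg (fun i _ => by split_ifs <;> norm_num)]
      congr 1
      have hc : (Finset.univ.filter fun i : Fin n => i.1 < 2 * k).card = 2 * k := by
        rw [Fin.card_filter_val_lt]; omega
      have hs : ∀ i : Fin n, (if i.1 < 2 * k then (2 / 3 : ℝ) else 1) =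
          1 - (if i.1 < 2 * k then 1 / 3 else 0) := fun i => by split_ifs <;> norm_num
      simp only [hs, Finset.sum_sub_distrib, ← Finset.sum_filter, Finset.sum_const, hc]
      simp
      ring
    rw [rootedAvg, Fintype.card_fin, Nat.add_sub_cancel]
    refine ENNReal.div_le_of_le_mul (hR.trans (le_of_eq ?_))
    rw [← ENNReal.ofReal_natCast, ← ENNReal.ofReal_mul' hn'.le]
    congr 1
    push_cast
    field_simp
    ring
  · have := lower_bound n hn _ _ (triangleStar_queenBee n k h)
    rwa [hcard] at this

/-- **Theorem (optimal Queen-Bee networks for 2 ≤ α ≤ 3).** Every Queen-Bee network `G`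
with `n` non-root vertices and `m = αn/2` edges satisfies `B(G) ≥ (5-α)/3`; moreover,
for all integers `n ≤ m ≤ 3n/2` there is a Queen-Bee network with `n` non-root vertices
and `m` edges attaining `B(G) = (5-α)/3` with `α = 2m/n`. -/
theorem stmt18 :
    (∀ (n : ℕ), 0 < n → ∀ (G : Multigraph (Fin (n + 1))) (ρ : Fin (n + 1)),
      QueenBee G ρ →
        ENNReal.ofReal ((5 - 2 * (G.edgeCount : ℝ) / n) / 3) ≤ rootedAvg G ρ) ∧
    (∀ n m : ℕ, 0 < n → n ≤ m → 2 * m ≤ 3 * n →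
      ∃ (G : Multigraph (Fin (n + 1))) (ρ : Fin (n + 1)), QueenBee G ρ ∧
        G.edgeCount = m ∧
        rootedAvg G ρ = ENNReal.ofReal ((5 - 2 * (m : ℝ) / n) / 3)) :=
  ⟨lower_bound, attained⟩
end

section
/- Let G be a Queen-Bee network with n non-root vertices and average degree α = 2e(G)/n. Then B(G) ≥ (5 − α)/3 if α ≤ 7/2, and B(G) ≥ 1/(α − 3/2) if α ≥ 7/2. -/
/-!
Writing `W` for the set of non-root vertices, let `p x` be the number of edges from `x ∈ W` to the
root, `m x y` the number of edges between `x` and `y` in `W` (a loop counting twice),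
`h x = ∑ y, m x y` and `d x = p x + h x`. Then `∑ (2 p + h) ≤ 2 e(G)`, so `α` is at least the
average of `2 p x + h x`.

Testing the dual (Dirichlet) form of the effective resistance with the potential equal to `1` at
`x`, to `1 / d y` at the neighbours `y` of `x`, and to `0` elsewhere gives `1 / C x ≤ R_{ρx}`, where
`C x = p x + ∑ y, m x y (1 - 1 / d y)` (`QBData.exists_potential`, `inv_le_effRes`).
It remains to bound `∑ 1 / C x` from below.

* For `α ≥ 7/2`, use the tangent line `1 / C ≥ 2 b - b² C` at `b = 1 / (α - 3/2) ≤ 1/2`. By symmetry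
  of `m`, `∑ C x = ∑ (p x + h x - h x / d x)`, and each summand is at most `2 p x + h x - 3/2` unless
  `p x = 1`, `h x = 0`; for these exceptional vertices `1 / C x = 1` is directly large enough.
* For `α ≤ 7/2`, compare `1 / C x` with `(5 - 2 p x - h x) / 3` vertex by vertex. Only the *leaves*
  (`p = h = 1`) can fall short, by `δ (d z) = (d z - 2) / (3 (2 d z - 1))` where `z` is the unique
  neighbour in `W`; this deficit is charged to `z`, whose own surplus covers the charges from all its
  leaves (`QBData.local_bound`, `surplus_numeric`).
-/

open scoped ENNReal

set_option linter.unusedSectionVars false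

attribute [local instance 10] Classical.propDecidable

open Multigraph

/-! ### The combinatorial inequalities -/

/-- The data of a Queen-Bee network seen from its non-root vertices: `p x` edges from `x` to the
root, and `m x y` edges between the non-root vertices `x` and `y` (each loop at `x` counting twice
in `m x x`). -/
structure QBData (W : Type) where
  p : W → ℕ
  m : W → W → ℕ
  p_pos : ∀ x, 1 ≤ p x
  symm : ∀ x y, m x y = m y x

namespace QBData

variable {W : Type} [Fintype W] (Q : QBData W)

/-- The degree of `x` within the non-root vertices. -/
def h (x : W) : ℕ := ∑ y, Q.m x y

/-- The total degree of `x`. -/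
def d (x : W) : ℕ := Q.p x + Q.h x

/-- An upper bound for the effective conductance between `x` and the root. -/
noncomputable def C (x : W) : ℝ := Q.p x + ∑ y, (Q.m x y : ℝ) * (1 - 1 / Q.d y)

lemma one_le_d (x : W) : (1 : ℝ) ≤ Q.d x := by
  have := Q.p_pos x
  exact_mod_cast (by unfold d; omega : 1 ≤ Q.d x)

lemma one_le_p (x : W) : (1 : ℝ) ≤ Q.p x := by exact_mod_cast Q.p_pos x

lemma one_div_d_le (x : W) : 1 / (Q.d x : ℝ) ≤ 1 := by
  rw [div_le_one (by linarith [Q.one_le_d x])]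
  exact Q.one_le_d x

lemma h_cast (x : W) : (Q.h x : ℝ) = ∑ y, (Q.m x y : ℝ) := by simp [h]

lemma d_cast (x : W) : (Q.d x : ℝ) = Q.p x + Q.h x := by simp [d]

lemma one_le_C (x : W) : 1 ≤ Q.C x := by
  have : 0 ≤ ∑ y, (Q.m x y : ℝ) * (1 - 1 / Q.d y) :=
    Finset.sum_nonneg fun y _ => mul_nonneg (by positivity) (by linarith [Q.one_div_d_le y])
  unfold C
  linarith [Q.one_le_p x]

lemma sum_symm (g : W → W → ℝ) :
    ∑ x, ∑ y, (Q.m x y : ℝ) * g x y = ∑ x, ∑ y, (Q.m x y : ℝ) * g y x := by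
  rw [Finset.sum_comm]
  exact Finset.sum_congr rfl fun x _ => Finset.sum_congr rfl fun y _ => by rw [Q.symm y x]

/-- The Dirichlet energy of a potential that vanishes at the root. -/
noncomputable def energy (φ : W → ℝ) : ℝ :=
  ∑ x, (Q.p x : ℝ) * φ x ^ 2 + 1 / 2 * ∑ x, ∑ y, (Q.m x y : ℝ) * (φ x - φ y) ^ 2

lemma energy_eq (φ : W → ℝ) :
    Q.energy φ = ∑ x, (Q.d x : ℝ) * φ x ^ 2 - ∑ x, ∑ y, (Q.m x y : ℝ) * (φ x * φ y) := by
  have h1 : ∑ x, ∑ y, (Q.m x y : ℝ) * (φ x - φ y) ^ 2 =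
      ∑ x, ∑ y, (Q.m x y : ℝ) * φ x ^ 2 + ∑ x, ∑ y, (Q.m x y : ℝ) * φ y ^ 2
        - 2 * ∑ x, ∑ y, (Q.m x y : ℝ) * (φ x * φ y) := by
    rw [← Finset.sum_add_distrib, Finset.mul_sum, ← Finset.sum_sub_distrib]
    refine Finset.sum_congr rfl fun x _ => ?_
    rw [← Finset.sum_add_distrib, Finset.mul_sum, ← Finset.sum_sub_distrib]
    exact Finset.sum_congr rfl fun y _ => by ring
  have h2 := Q.sum_symm fun x _ => φ x ^ 2
  have h3 : ∑ x, (Q.d x : ℝ) * φ x ^ 2 =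
      ∑ x, (Q.p x : ℝ) * φ x ^ 2 + ∑ x, ∑ y, (Q.m x y : ℝ) * φ x ^ 2 := by
    rw [← Finset.sum_add_distrib]
    refine Finset.sum_congr rfl fun x _ => ?_
    rw [Q.d_cast, Q.h_cast, add_mul, Finset.sum_mul]
  unfold energy
  rw [h1, h3]
  linarith

/-- The local test potential: `1` at `x`, `1 / d y` at the neighbours `y` of `x`, else `0`. Since it
is nonnegative, the edges not meeting `x` contribute at most the sum of the squares at their ends. -/
lemma exists_potential (x : W) : ∃ φ : W → ℝ, φ x = 1 ∧ Q.energy φ ≤ Q.C x := by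
  classical
  let φ : W → ℝ := fun y => if y = x then 1 else if Q.m x y = 0 then 0 else 1 / Q.d y
  have hφx : φ x = 1 := by simp [φ]
  have hφ0 : ∀ y, 0 ≤ φ y := by
    intro y
    simp only [φ]
    split_ifs <;> positivity
  refine ⟨φ, hφx, ?_⟩
  let S := Finset.univ.erase x
  have split : ∀ g : W → ℝ, ∑ y, g y = g x + ∑ y ∈ S, g y := fun g =>
    (Finset.add_sum_erase _ _ (Finset.mem_univ x)).symm
  have hdiag : ∑ y, (Q.d y : ℝ) * φ y ^ 2 ≤ Q.d x + ∑ y ∈ S, (Q.m x y : ℝ) * (1 / Q.d y) := by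
    rw [split, hφx]
    have : ∑ y ∈ S, (Q.d y : ℝ) * φ y ^ 2 ≤ ∑ y ∈ S, (Q.m x y : ℝ) * (1 / Q.d y) := by
      refine Finset.sum_le_sum fun y hy => ?_
      have hyx : y ≠ x := (Finset.mem_erase.1 hy).1
      have hd := Q.one_le_d y
      by_cases hm : Q.m x y = 0
      · simp [φ, hyx, hm]
      · have hm1 : (1 : ℝ) ≤ Q.m x y := by exact_mod_cast Nat.one_le_iff_ne_zero.2 hm
        simp only [φ, hyx, hm, if_false]
        have : (Q.d y : ℝ) * (1 / Q.d y) ^ 2 = 1 * (1 / Q.d y) := by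
          field_simp
        rw [this]
        exact mul_le_mul_of_nonneg_right hm1 (by positivity)
    linarith
  have hrow : ∀ y ∈ S, (Q.m x y : ℝ) * φ y = (Q.m x y : ℝ) * (1 / Q.d y) := by
    intro y hy
    have hyx : y ≠ x := (Finset.mem_erase.1 hy).1
    by_cases hm : Q.m x y = 0
    · simp [hm]
    · simp [φ, hyx, hm]
  have hoff : (Q.m x x : ℝ) + 2 * ∑ y ∈ S, (Q.m x y : ℝ) * (1 / Q.d y)
      ≤ ∑ u, ∑ y, (Q.m u y : ℝ) * (φ u * φ y) := by
    rw [split, split, hφx]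
    have h1 : ∑ y ∈ S, (Q.m x y : ℝ) * (1 * φ y) = ∑ y ∈ S, (Q.m x y : ℝ) * (1 / Q.d y) :=
      Finset.sum_congr rfl fun y hy => by rw [one_mul, hrow y hy]
    have h2 : ∑ y ∈ S, (Q.m x y : ℝ) * (1 / Q.d y) ≤
        ∑ u ∈ S, ∑ y, (Q.m u y : ℝ) * (φ u * φ y) := by
      refine Finset.sum_le_sum fun u hu => ?_
      rw [← hrow u hu]
      have := Finset.single_le_sum (f := fun y => (Q.m u y : ℝ) * (φ u * φ y))
        (fun y _ => mul_nonneg (by positivity) (mul_nonneg (hφ0 u) (hφ0 y))) (Finset.mem_univ x)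
      simpa [hφx, Q.symm u x] using this
    rw [h1]
    linarith
  have hC : Q.C x = Q.d x - ((Q.m x x : ℝ) * (1 / Q.d x) + ∑ y ∈ S, (Q.m x y : ℝ) * (1 / Q.d y)) := by
    rw [← split fun y => (Q.m x y : ℝ) * (1 / Q.d y), Q.d_cast, Q.h_cast, C]
    simp only [mul_sub, mul_one, Finset.sum_sub_distrib]
    ring
  have hxx : (Q.m x x : ℝ) * (1 / Q.d x) ≤ Q.m x x :=
    mul_le_of_le_one_right (by positivity) (Q.one_div_d_le x)
  rw [energy_eq, hC]
  linarith

/-- By symmetry of `m`, `∑ C = ∑ (p + h - h / d)`. -/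
lemma sum_C : ∑ x, Q.C x = ∑ x, ((Q.p x : ℝ) + Q.h x - Q.h x * (1 / Q.d x)) := by
  have h1 := Q.sum_symm fun _ y => 1 / (Q.d y : ℝ)
  have h2 : ∀ x, Q.C x = (Q.p x : ℝ) + Q.h x - ∑ y, (Q.m x y : ℝ) * (1 / Q.d y) := by
    intro x
    rw [C, Q.h_cast]
    simp only [mul_sub, mul_one, Finset.sum_sub_distrib]
    ring
  simp only [h2, Finset.sum_sub_distrib, h1]
  congr 1
  refine Finset.sum_congr rfl fun x _ => ?_
  rw [Q.h_cast, Finset.sum_mul]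

/-- The bound used for `α ≥ 7/2`. -/
lemma sum_inv_C_ge_tangent {b : ℝ} (hb : b ≤ 1 / 2) :
    ∑ x, (2 * b - b ^ 2 * (2 * Q.p x + Q.h x - 3 / 2)) ≤ ∑ x, 1 / Q.C x := by
  classical
  -- `ε` is the indicator of the exceptional vertices, where the summand of `∑ C` is `1`
  -- instead of at most `2 p + h - 3 / 2 = 1 / 2`.
  let ε : W → ℝ := fun x => if Q.p x = 1 ∧ Q.h x = 0 then 1 / 2 else 0
  have htan : ∀ x, 2 * b - b ^ 2 * Q.C x + b ^ 2 * ε x ≤ 1 / Q.C x := by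
    intro x
    have hC := Q.one_le_C x
    by_cases hx : Q.p x = 1 ∧ Q.h x = 0
    · have hm : ∀ y, Q.m x y = 0 := by
        have := hx.2
        simpa [h] using this
      have : Q.C x = 1 := by simp [C, hx.1, hm]
      simp only [ε, hx, this]
      norm_num
      nlinarith
    · simp only [ε, hx, if_false]
      rw [le_div_iff₀ (by linarith)]
      nlinarith [sq_nonneg (b * Q.C x - 1)]
  have hsum : ∑ x, (Q.C x - ε x) ≤ ∑ x, (2 * (Q.p x : ℝ) + Q.h x - 3 / 2) := by
    rw [Finset.sum_sub_distrib, sum_C, ← Finset.sum_sub_distrib]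
    refine Finset.sum_le_sum fun x _ => ?_
    have hp := Q.p_pos x
    have hd := Q.one_le_d x
    by_cases hx : Q.p x = 1 ∧ Q.h x = 0
    · simp only [ε, hx]
      norm_num
    · simp only [ε, hx, if_false]
      by_cases hp1 : Q.p x = 1
      · have hh : 1 ≤ Q.h x := by
          by_contra hcon
          exact hx ⟨hp1, by omega⟩
        have hh' : (1 : ℝ) ≤ Q.h x := by exact_mod_cast hh
        have hdx : (Q.d x : ℝ) = 1 + Q.h x := by rw [d_cast, hp1]; norm_num
        have : 1 / 2 ≤ (Q.h x : ℝ) * (1 / Q.d x) := by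
          rw [hdx, mul_one_div, div_le_div_iff₀ (by norm_num) (by linarith)]
          linarith
        rw [hp1]
        push_cast
        linarith
      · have : (2 : ℝ) ≤ Q.p x := by exact_mod_cast (by omega : 2 ≤ Q.p x)
        have : 0 ≤ (Q.h x : ℝ) * (1 / Q.d x) := by positivity
        linarith
  calc ∑ x, (2 * b - b ^ 2 * (2 * Q.p x + Q.h x - 3 / 2))
      = ∑ _x : W, 2 * b - b ^ 2 * ∑ x, (2 * (Q.p x : ℝ) + Q.h x - 3 / 2) := by
        rw [Finset.sum_sub_distrib, Finset.mul_sum]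
    _ ≤ ∑ _x : W, 2 * b - b ^ 2 * ∑ x, (Q.C x - ε x) := by
        have := mul_le_mul_of_nonneg_left hsum (sq_nonneg b)
        linarith
    _ = ∑ x, (2 * b - b ^ 2 * Q.C x + b ^ 2 * ε x) := by
        rw [Finset.mul_sum, ← Finset.sum_sub_distrib]
        exact Finset.sum_congr rfl fun x _ => by ring
    _ ≤ _ := Finset.sum_le_sum fun x _ => htan x

/-- The deficit of a leaf (`p = h = 1`) whose neighbour has degree `t`, namely
`2 / 3 - 1 / (2 - 1 / t)`. -/
noncomputable def δ (t : ℝ) : ℝ := (t - 2) / (3 * (2 * t - 1))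

/-- A vertex that is not a leaf, with `l` leaves attached to it, has a surplus covering the deficit
of these leaves. Equality holds at
`(p, h, l) = (1, 0, 0), (1, 2, 0), (1, 2, 1)`. -/
lemma surplus_numeric {p h l : ℕ} (hp : 1 ≤ p) (hl : l ≤ h) (hne : ¬ (p = 1 ∧ h = 1)) :
    (5 - 2 * (p : ℝ) - h) / 3 + l * δ (p + h) ≤ 1 / (p + h - l / 2) := by
  have hp' : (1 : ℝ) ≤ p := by exact_mod_cast hp
  have hl' : (l : ℝ) ≤ h := by exact_mod_cast hl
  have hl0 : (0 : ℝ) ≤ l := by positivity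
  have hpos : 0 ≤ 1 / ((p : ℝ) + h - l / 2) := by
    apply div_nonneg zero_le_one
    linarith
  -- As `δ ≤ 1 / 6`, all but finitely many cases have a nonpositive left side.
  have hbig : (5 - 2 * (p : ℝ) - h) / 3 + h / 6 ≤ 0 →
      (5 - 2 * (p : ℝ) - h) / 3 + l * δ (p + h) ≤ 1 / (p + h - l / 2) := by
    intro hcase
    have hδ : δ ((p : ℝ) + h) ≤ 1 / 6 := by
      unfold δ
      rw [div_le_div_iff₀ (by nlinarith) (by norm_num)]
      linarith
    nlinarith [mul_le_mul_of_nonneg_left hδ hl0]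
  rcases Nat.lt_or_ge p 3 with hp3 | hp3
  · interval_cases p
    · rcases Nat.lt_or_ge h 6 with hh | hh
      · interval_cases h
        all_goals first
          | exact absurd ⟨rfl, rfl⟩ hne
          | (interval_cases l <;> norm_num [δ])
      · apply hbig
        have : (6 : ℝ) ≤ h := by exact_mod_cast hh
        push_cast
        linarith
    · rcases Nat.lt_or_ge h 2 with hh | hh
      · interval_cases h <;> interval_cases l <;> norm_num [δ]
      · apply hbig
        have : (2 : ℝ) ≤ h := by exact_mod_cast hh
        push_cast
        linarith
  · apply hbig
    have : (3 : ℝ) ≤ p := by exact_mod_cast hp3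
    linarith

open Classical in
/-- The indicator of the leaves: one edge to the root and one to another non-root vertex. -/
noncomputable def leaf (x : W) : ℕ := if Q.p x = 1 ∧ Q.h x = 1 then 1 else 0

/-- The vertexwise inequality after each leaf has charged its deficit to its neighbour. -/
lemma local_bound (x : W) :
    (5 - 2 * (Q.p x : ℝ) - Q.h x) / 3 - ∑ y, (Q.m x y : ℝ) * (Q.leaf x * δ (Q.d y))
      + ∑ y, (Q.m x y : ℝ) * (Q.leaf y * δ (Q.d x)) ≤ 1 / Q.C x := by
  classical
  by_cases hx : Q.p x = 1 ∧ Q.h x = 1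
  · have hδ : δ (Q.d x) = 0 := by norm_num [δ, Q.d_cast, hx.1, hx.2]
    have hlx : Q.leaf x = 1 := by simp [leaf, hx]
    obtain ⟨z, hz, hz'⟩ : ∃ z, Q.m x z = 1 ∧ ∀ y, y ≠ z → Q.m x y = 0 := by
      have hs : ∑ y, Q.m x y = 1 := hx.2
      obtain ⟨z, -, hz⟩ := Finset.exists_ne_zero_of_sum_ne_zero (by rw [hs]; exact one_ne_zero)
      rw [← Finset.add_sum_erase _ _ (Finset.mem_univ z)] at hs
      have h0 : ∑ y ∈ Finset.univ.erase z, Q.m x y = 0 := by omega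
      exact ⟨z, by omega, fun y hy => (Finset.sum_eq_zero_iff.1 h0) y (by simp [hy])⟩
    have hsum : ∀ g : W → ℝ, ∑ y, (Q.m x y : ℝ) * g y = g z := by
      intro g
      rw [Finset.sum_eq_single z]
      · simp [hz]
      · intro y _ hy
        simp [hz' y hy]
      · simp
    have hd := Q.one_le_d z
    rw [C, hsum, hsum, hsum fun y => 1 - 1 / (Q.d y : ℝ), hδ, hlx, hx.1, hx.2, δ]
    have h1 : (1 : ℝ) + (1 - 1 / Q.d z) = (2 * Q.d z - 1) / Q.d z := by field_simp; ring
    have h2 : (2 * (Q.d z : ℝ) - 1) ≠ 0 := by linarith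
    push_cast
    rw [h1]
    rw [mul_zero]
    apply le_of_eq
    field_simp
    ring
  · have hlx : Q.leaf x = 0 := by simp only [leaf, hx, if_false]
    set l : ℕ := ∑ y, Q.m x y * Q.leaf y with hl
    have hle : ∀ y, Q.leaf y ≤ 1 := by
      intro y
      unfold leaf
      split_ifs <;> simp
    have hlh : l ≤ Q.h x :=
      Finset.sum_le_sum fun y _ => by simpa using Nat.mul_le_mul_left (Q.m x y) (hle y)
    have hlc : (l : ℝ) = ∑ y, (Q.m x y : ℝ) * Q.leaf y := by simp [hl]
    have hC : Q.C x ≤ Q.p x + Q.h x - l / 2 := by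
      rw [C, Q.h_cast, hlc, Finset.sum_div, add_sub_assoc, ← Finset.sum_sub_distrib]
      gcongr with y
      have : (Q.leaf y : ℝ) / 2 ≤ 1 / Q.d y := by
        by_cases hy : Q.p y = 1 ∧ Q.h y = 1
        · norm_num [leaf, hy, Q.d_cast]
        · simp [leaf, hy]
      nlinarith [mul_le_mul_of_nonneg_left this (Nat.cast_nonneg (α := ℝ) (Q.m x y))]
    have hsum : ∑ y, (Q.m x y : ℝ) * (Q.leaf y * δ (Q.d x)) = l * δ (Q.p x + Q.h x) := by
      rw [hlc, Finset.sum_mul, ← Q.d_cast]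
      exact Finset.sum_congr rfl fun y _ => by ring
    have hnum := surplus_numeric (Q.p_pos x) hlh hx
    have hinv := one_div_le_one_div_of_le (by linarith [Q.one_le_C x]) hC
    rw [hsum, hlx]
    simp only [Nat.cast_zero, zero_mul, mul_zero, Finset.sum_const_zero, sub_zero]
    linarith

/-- The bound used for `α ≤ 7/2`. -/
lemma sum_inv_C_ge_linear :
    ∑ x, (5 - 2 * (Q.p x : ℝ) - Q.h x) / 3 ≤ ∑ x, 1 / Q.C x := by
  have h1 := Finset.sum_le_sum fun x (_ : x ∈ Finset.univ) => Q.local_bound x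
  rw [Finset.sum_add_distrib, Finset.sum_sub_distrib] at h1
  have h2 := Q.sum_symm fun x y => Q.leaf x * δ (Q.d y)
  linarith

end QBData

/-! ### Effective resistance and the Dirichlet energy -/

namespace Multigraph

variable {V : Type} [Fintype V] [DecidableEq V] (G : Multigraph V)

/-- The number of edges between `u` and `v`, each loop counting twice. -/
noncomputable def mult (u v : V) : ℕ :=
  ∑ e : G.E, ((if G.fst e = u then if G.snd e = v then 1 else 0 else 0)
    + (if G.snd e = u then if G.fst e = v then 1 else 0 else 0))

lemma mult_symm (u v : V) : G.mult u v = G.mult v u := by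
  refine Finset.sum_congr rfl fun e _ => ?_
  rw [add_comm]
  congr 1 <;> split_ifs <;> rfl

lemma sum_mult (g : V → V → ℝ) (hg : ∀ u v, g u v = g v u) :
    ∑ u, ∑ v, (G.mult u v : ℝ) * g u v = 2 * ∑ e : G.E, g (G.fst e) (G.snd e) := by
  have h1 : ∀ u v, (G.mult u v : ℝ) * g u v =
      ∑ e : G.E, ((if G.fst e = u then if G.snd e = v then g u v else 0 else 0)
        + (if G.snd e = u then if G.fst e = v then g u v else 0 else 0)) := by
    intro u v
    rw [mult]
    push_cast
    rw [Finset.sum_mul]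
    refine Finset.sum_congr rfl fun e _ => ?_
    split_ifs <;> ring
  simp only [h1]
  rw [Finset.mul_sum]
  have h2 : ∀ u, ∑ v, ∑ e : G.E, ((if G.fst e = u then if G.snd e = v then g u v else 0 else 0)
        + (if G.snd e = u then if G.fst e = v then g u v else 0 else 0)) =
      ∑ e : G.E, ((if G.fst e = u then g u (G.snd e) else 0)
        + (if G.snd e = u then g u (G.fst e) else 0)) := by
    intro u
    rw [Finset.sum_comm]
    refine Finset.sum_congr rfl fun e _ => ?_
    rw [Finset.sum_add_distrib]
    congr 1 <;> split_ifs <;> simp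
  simp only [h2]
  rw [Finset.sum_comm]
  refine Finset.sum_congr rfl fun e _ => ?_
  rw [Finset.sum_add_distrib]
  simp only [Finset.sum_ite_eq, Finset.mem_univ, if_true]
  rw [hg (G.snd e)]
  ring

lemma sum_mul_netFlow (f : G.E → ℝ) (φ : V → ℝ) :
    ∑ v, φ v * G.netFlow f v = ∑ e : G.E, f e * (φ (G.fst e) - φ (G.snd e)) := by
  simp only [netFlow, Finset.mul_sum]
  rw [Finset.sum_comm]
  refine Finset.sum_congr rfl fun e _ => ?_
  simp only [mul_sub, Finset.sum_sub_distrib, mul_ite, mul_zero, Finset.sum_ite_eq,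
    Finset.mem_univ, if_true]
  ring

lemma netFlow_target {x y : V} (hxy : x ≠ y) {f : G.E → ℝ} (hf : G.IsUnitFlow x y f) :
    G.netFlow f y = -1 := by
  have h1 := G.sum_mul_netFlow f fun _ => 1
  have h2 : ∑ v, G.netFlow f v = G.netFlow f x + G.netFlow f y :=
    Fintype.sum_eq_add x y hxy fun v hv => hf.2 v hv.1 hv.2
  simp only [one_mul, sub_self, mul_zero, Finset.sum_const_zero] at h1
  rw [h1, hf.1] at h2
  linarith

/-- Dirichlet's principle: a potential `φ` with `φ ρ = 0`, `φ x = 1` and energy at most `c` gives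
`1 / c` as a lower bound for the effective resistance. -/
lemma inv_le_effRes {ρ x : V} (hx : ρ ≠ x) {φ : V → ℝ} (h0 : φ ρ = 0) (h1 : φ x = 1) {c : ℝ}
    (hc : 0 < c) (hE : ∑ e : G.E, (φ (G.fst e) - φ (G.snd e)) ^ 2 ≤ c) :
    ENNReal.ofReal (1 / c) ≤ G.effRes ρ x := by
  rw [effRes, if_neg hx]
  refine le_iInf fun f => ENNReal.ofReal_le_ofReal ?_
  have hpair : ∑ e : G.E, f.1 e * (φ (G.fst e) - φ (G.snd e)) = -1 := by
    rw [← sum_mul_netFlow, Fintype.sum_eq_add ρ x hx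
      fun v hv => by rw [f.2.2 v hv.1 hv.2, mul_zero], h0, h1, G.netFlow_target hx f.2]
    norm_num
  -- Cauchy–Schwarz for the flow and the gradient of `φ`, as Kirchhoff pairs them to `-1`.
  have hCS := Finset.sum_mul_sq_le_sq_mul_sq Finset.univ f.1
    fun e => φ (G.fst e) - φ (G.snd e)
  rw [hpair] at hCS
  have hpos : 0 ≤ ∑ e : G.E, f.1 e ^ 2 := Finset.sum_nonneg fun e _ => sq_nonneg _
  rw [div_le_iff₀ hc]
  nlinarith [mul_le_mul_of_nonneg_left hE hpos]

/-- The `QBData` of a network in which every non-root vertex is joined to the root `ρ`. -/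
noncomputable def toQB (ρ : V) (hQB : ∀ v, v ≠ ρ → G.Adj ρ v) : QBData {v : V // v ≠ ρ} where
  p v := G.mult v.1 ρ
  m u v := G.mult u.1 v.1
  symm u v := G.mult_symm _ _
  p_pos v := by
    obtain ⟨e, he⟩ := hQB v.1 v.2
    refine le_trans ?_ (Finset.single_le_sum (fun _ _ => Nat.zero_le _) (Finset.mem_univ e))
    rcases he with ⟨h1, h2⟩ | ⟨h1, h2⟩ <;> simp [h1, h2]

variable {ρ : V} (hQB : ∀ v, v ≠ ρ → G.Adj ρ v)

lemma sum_mult_split (g : V → V → ℝ) (hg : ∀ u v, g u v = g v u) :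
    ∑ u, ∑ v, (G.mult u v : ℝ) * g u v = G.mult ρ ρ * g ρ ρ
      + 2 * ∑ x, ((G.toQB ρ hQB).p x : ℝ) * g x.1 ρ
      + ∑ x, ∑ y, ((G.toQB ρ hQB).m x y : ℝ) * g x.1 y.1 := by
  have hsplit := fun F : V → ℝ => Fintype.sum_eq_add_sum_subtype_ne F ρ
  rw [hsplit]
  simp only [hsplit fun v => (G.mult _ v : ℝ) * g _ v]
  rw [Finset.sum_add_distrib]
  simp only [toQB]
  have : ∑ x : {v // v ≠ ρ}, (G.mult ρ x.1 : ℝ) * g ρ x.1 =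
      ∑ x : {v // v ≠ ρ}, (G.mult x.1 ρ : ℝ) * g x.1 ρ :=
    Finset.sum_congr rfl fun x _ => by rw [G.mult_symm, hg]
  rw [this]
  ring

lemma sum_deg_le : ∑ x, (2 * ((G.toQB ρ hQB).p x : ℝ) + (G.toQB ρ hQB).h x) ≤ 2 * G.edgeCount := by
  have h1 := G.sum_mult (fun _ _ => 1) fun _ _ => rfl
  rw [G.sum_mult_split hQB (fun _ _ => 1) fun _ _ => rfl] at h1
  simp only [mul_one, Finset.sum_const, Finset.card_univ, nsmul_eq_mul] at h1
  rw [edgeCount, ← h1, Finset.sum_add_distrib, Finset.mul_sum]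
  simp only [QBData.h_cast]
  have : (0 : ℝ) ≤ G.mult ρ ρ := by positivity
  linarith

lemma inv_C_le_effRes (x : {v : V // v ≠ ρ}) :
    ENNReal.ofReal (1 / (G.toQB ρ hQB).C x) ≤ G.effRes ρ x.1 := by
  obtain ⟨φ, hφx, hφ⟩ := (G.toQB ρ hQB).exists_potential x
  let ψ : V → ℝ := fun v => if h : v ≠ ρ then φ ⟨v, h⟩ else 0
  have hψ0 : ψ ρ = 0 := by simp [ψ]
  have hψ : ∀ y : {v : V // v ≠ ρ}, ψ y.1 = φ y := fun y => by simp [ψ, y.2]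
  refine G.inv_le_effRes x.2.symm hψ0 ((hψ x).trans hφx)
    (by linarith [(G.toQB ρ hQB).one_le_C x]) (le_trans (le_of_eq ?_) hφ)
  have h1 := G.sum_mult (fun u v => (ψ u - ψ v) ^ 2) fun u v => by ring
  rw [G.sum_mult_split hQB (fun u v => (ψ u - ψ v) ^ 2) fun u v => by ring] at h1
  simp only [hψ, hψ0, sub_self, sub_zero] at h1
  rw [QBData.energy]
  linarith

lemma sum_inv_C_le_Rtot :
    ENNReal.ofReal (∑ x, 1 / (G.toQB ρ hQB).C x) ≤ G.Rtot ρ := by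
  rw [Rtot, Fintype.sum_eq_add_sum_subtype_ne _ ρ, ENNReal.ofReal_sum_of_nonneg]
  · exact le_add_left (Finset.sum_le_sum fun x _ => G.inv_C_le_effRes hQB x)
  · intro x _
    have := (G.toQB ρ hQB).one_le_C x
    positivity

end Multigraph

/-- **Lemma (Queen-Bee lower bounds for all α).** Every Queen-Bee network `G` with `n`
non-root vertices and average degree `α = 2e(G)/n` satisfies `B(G) ≥ (5-α)/3` if
`α ≤ 7/2`, and `B(G) ≥ 1/(α - 3/2)` if `α ≥ 7/2`. -/
theorem stmt19 (n : ℕ) (hn : 0 < n) (G : Multigraph (Fin (n + 1))) (ρ : Fin (n + 1))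
    (hQB : QueenBee G ρ) :
    (2 * (G.edgeCount : ℝ) / n ≤ 7 / 2 →
      ENNReal.ofReal ((5 - 2 * (G.edgeCount : ℝ) / n) / 3) ≤ rootedAvg G ρ) ∧
    (7 / 2 ≤ 2 * (G.edgeCount : ℝ) / n →
      ENNReal.ofReal (1 / (2 * (G.edgeCount : ℝ) / n - 3 / 2)) ≤ rootedAvg G ρ) := by
  have hn' : (0 : ℝ) < n := by exact_mod_cast hn
  have hdeg := G.sum_deg_le hQB
  set Q := G.toQB ρ hQB
  have hcard : Fintype.card {v : Fin (n + 1) // v ≠ ρ} = n := by simp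
  have key : ∀ a : ℝ, n * a ≤ ∑ x, 1 / Q.C x → ENNReal.ofReal a ≤ rootedAvg G ρ := by
    intro a ha
    have hsub : Fintype.card (Fin (n + 1)) - 1 = n := by simp
    rw [rootedAvg, hsub, ENNReal.le_div_iff_mul_le (Or.inl (by exact_mod_cast hn.ne'))
      (Or.inl (ENNReal.natCast_ne_top n)), mul_comm, ← ENNReal.ofReal_natCast,
      ← ENNReal.ofReal_mul hn'.le]
    exact (ENNReal.ofReal_le_ofReal ha).trans (G.sum_inv_C_le_Rtot hQB)
  set α : ℝ := 2 * (G.edgeCount : ℝ) / n with hα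
  have hαn : 2 * (G.edgeCount : ℝ) = n * α := by rw [hα]; field_simp
  have hconst : ∀ t : ℝ, ∑ _x : {v : Fin (n + 1) // v ≠ ρ}, t = n * t := by
    intro t
    rw [Finset.sum_const, Finset.card_univ, hcard, nsmul_eq_mul]
  refine ⟨fun _ => key _ (le_trans ?_ Q.sum_inv_C_ge_linear), fun h => ?_⟩
  · have : ∑ x, (5 - 2 * (Q.p x : ℝ) - Q.h x) / 3
        = (n * 5 - ∑ x, (2 * (Q.p x : ℝ) + Q.h x)) / 3 := by
      rw [← hconst, ← Finset.sum_sub_distrib, Finset.sum_div]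
      exact Finset.sum_congr rfl fun x _ => by ring
    rw [this]
    linarith
  · have hb0 : 0 < α - 3 / 2 := by linarith
    set b := 1 / (α - 3 / 2) with hb
    have hb2 : b ≤ 1 / 2 := by
      rw [hb]
      exact one_div_le_one_div_of_le (by norm_num) (by linarith)
    have hb1 : b * (α - 3 / 2) = 1 := one_div_mul_cancel hb0.ne'
    refine key _ (le_trans ?_ (Q.sum_inv_C_ge_tangent hb2))
    have : ∑ x, (2 * b - b ^ 2 * (2 * Q.p x + Q.h x - 3 / 2))
        = n * (2 * b + b ^ 2 * (3 / 2)) - b ^ 2 * ∑ x, (2 * (Q.p x : ℝ) + Q.h x) := by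
      rw [← hconst, Finset.mul_sum, ← Finset.sum_sub_distrib]
      exact Finset.sum_congr rfl fun x _ => by ring
    rw [this]
    have h2 := mul_le_mul_of_nonneg_left hdeg (sq_nonneg b)
    rw [hαn] at h2
    -- The tangent line meets the hyperbola at the average: `2 b - b² (α - 3 / 2) = b`.
    have h3 : n * b = n * (2 * b + b ^ 2 * (3 / 2)) - b ^ 2 * (n * α) := by
      linear_combination ((n : ℝ) * b) * hb1
    linarith
end
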